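/- Let C ∈ ℝ^{M×n} satisfy C𝟙 = 0. Let ν, i be row indices and n', η be column indices with η ≠ n'. Assume C_{ν,n'} > 0 and C_{ν,j} ≤ 0 for all j ≠ n' (so n' is the unique positive entry of row ν), and assume C_{i,j} ≤ 0 for all j ≠ η. Then the matrix C' := C·R(C,ν,n') satisfies: C'𝟙 = 0; C'_{i,n'} = 0; C'_{i,j} ≤ 0 for all j ≠ η; and if row i of C' is not identically zero, then C'_{i,η} > 0 (so η remains the unique positive entry of row i after the elimination step). -/

import Mathlib

/-!
Entrywise, `C' k j = C k j - (C ν j / C ν n') * C k n'`. Summing over `j` shows that zero row sums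
are preserved, and `j = n'` gives zero. In row `i`, for `j ∉ {η, n'}`, the subtracted term is a
product of two nonpositive numbers, since `η ≠ n'` makes `C i n'` nonpositive; so the entry stays
nonpositive. A nonzero row with zero sum whose entries off `η` are nonpositive has a positive
entry at `η`.
-/

open Matrix

/-- The elimination matrix `R(C, m, n') = I - (C m n')⁻¹ eₙ' (eₘᵀ C)`. -/
noncomputable def elimR {M n : ℕ} (C : Matrix (Fin M) (Fin n) ℝ) (m : Fin M) (n' : Fin n) :
    Matrix (Fin n) (Fin n) ℝ :=
  1 - (C m n')⁻¹ • Matrix.of (fun i j => if i = n' then C m j else 0)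

/-- Entrywise form of the elimination step. -/
lemma mul_elimR_apply {M n : ℕ} (C : Matrix (Fin M) (Fin n) ℝ) (m k : Fin M) (n' j : Fin n) :
    (C * elimR C m n') k j = C k j - C m j / C m n' * C k n' := by
  rw [elimR, Matrix.mul_sub, Matrix.mul_one, Matrix.mul_smul, Matrix.sub_apply, Matrix.smul_apply,
    Matrix.mul_apply]
  simp only [Matrix.of_apply, mul_ite, mul_zero, Finset.sum_ite_eq',
    Finset.mem_univ, if_true, smul_eq_mul]
  ring

/-- sign-structure preservation of the elimination step. If `C 𝟙 = 0`,
row `ν` has its unique positive entry in column `n'`, and all entries of row `i` except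
possibly the one in column `η ≠ n'` are nonpositive, then `C' = C · R(C,ν,n')` satisfies
`C' 𝟙 = 0`, `C'_{i,n'} = 0`, `C'_{i,j} ≤ 0` for `j ≠ η`, and if row `i` of `C'` does
not vanish then `C'_{i,η} > 0`. -/
theorem elim_step_sign_structure {M n : ℕ} (C : Matrix (Fin M) (Fin n) ℝ)
    (hC : C.mulVec (fun _ => 1) = 0)
    (ν i : Fin M) (n' η : Fin n) (hne : η ≠ n')
    (hpos : 0 < C ν n') (hνneg : ∀ j, j ≠ n' → C ν j ≤ 0)
    (hineg : ∀ j, j ≠ η → C i j ≤ 0) :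
    (C * elimR C ν n').mulVec (fun _ => 1) = 0 ∧
    (C * elimR C ν n') i n' = 0 ∧
    (∀ j, j ≠ η → (C * elimR C ν n') i j ≤ 0) ∧
    ((∃ j, (C * elimR C ν n') i j ≠ 0) → 0 < (C * elimR C ν n') i η) := by
  have row_sum : ∀ k, ∑ j, C k j = 0 := fun k => by
    simpa [Matrix.mulVec, dotProduct] using congrFun hC k
  have row_sum' : ∀ k, ∑ j, (C * elimR C ν n') k j = 0 := fun k => by
    simp only [mul_elimR_apply, Finset.sum_sub_distrib, ← Finset.sum_mul, ← Finset.sum_div,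
      row_sum, zero_div, zero_mul, sub_zero]
  have pivot_zero : (C * elimR C ν n') i n' = 0 := by
    rw [mul_elimR_apply, div_self hpos.ne', one_mul, sub_self]
  have nonpos : ∀ j, j ≠ η → (C * elimR C ν n') i j ≤ 0 := by
    intro j hj
    by_cases hjn : j = n'
    · rw [hjn, pivot_zero]
    · rw [mul_elimR_apply]
      have := mul_nonneg_of_nonpos_of_nonpos
        (div_nonpos_of_nonpos_of_nonneg (hνneg j hjn) hpos.le) (hineg n' hne.symm)
      linarith [hineg j hj]
  refine ⟨?_, pivot_zero, nonpos, ?_⟩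
  · ext k
    simpa [Matrix.mulVec, dotProduct] using row_sum' k
  · rintro ⟨j, hj⟩
    -- Otherwise all entries of the row are nonpositive with sum zero, so they all vanish.
    by_contra hη
    have all_nonpos : ∀ l ∈ Finset.univ, (C * elimR C ν n') i l ≤ 0 := by
      intro l _
      by_cases hl : l = η
      · rw [hl]; exact not_lt.mp hη
      · exact nonpos l hl
    exact hj ((Finset.sum_eq_zero_iff_of_nonpos all_nonpos).mp (row_sum' i) j (Finset.mem_univ j))
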